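/- arXiv:1409.6352 — 3 statements merged into one kernel-verified Lean document; each statement's English description precedes it below -/
import Mathlib

section
/- Let R_ε = {x ∈ [0,1] : there exist integers a and q ≥ 1 with gcd(a,q) = 1 such that (x − a/q)² + (ε − 1/(2q²))² ≤ 1/(4q⁴)} be the set of points of the horizontal segment [0,1] at height ε that lie inside some Ford disk. Then the Lebesgue measure of R_ε tends to 3/π as ε → 0⁺. -/
open MeasureTheory

/-- The set of points of the horizontal segment `[0,1]` at height `ε` lying inside some
Ford disk: the Ford disk over `a/q` (with `gcd(a,q) = 1`, `q ≥ 1`) is the closed disk with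
center `(a/q, 1/(2q²))` and radius `1/(2q²)`. -/
def fordSet (ε : ℝ) : Set ℝ :=
  {x | x ∈ Set.Icc (0 : ℝ) 1 ∧ ∃ a q : ℤ, 1 ≤ q ∧ Int.gcd a q = 1 ∧
    (x - (a : ℝ) / q) ^ 2 + (ε - 1 / (2 * (q : ℝ) ^ 2)) ^ 2 ≤ 1 / (4 * (q : ℝ) ^ 4)}

/-!
Distinct Ford disks overlap at most in a tangency point and the whole picture has period one, so the
measure of the section at height `ε` is the sum, over the rationals `c ∈ [0, 1)`, of the length of
the full chord cut out of the disk at `c`. A disk of denominator `q` has chord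
`2 √(ε / q² - ε²)`, and there are `φ q` of them. With `ε = h²` this gives the exact formula

  `|R_ε| = 2 h ∑_q (φ q / q) √(1 - (h q)²)`,

a Riemann sum of mesh `h` weighted by `φ q / q = ∑_{d ∣ q} μ d / d`. Exchanging the two sums turns
it into Riemann sums of mesh `h d`, and dominated convergence yields the limit
`2 (∑_d μ d / d²) ∫₀^∞ √(1 - x²) dx = 2 · (6 / π²) · (π / 4) = 3 / π`, the square root being `0` for
`x > 1` by the convention for negative radicands.
-/

open Set Filter Topology
open scoped ENNReal Pointwise ArithmeticFunction.Moebius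

section RiemannSum

variable {f : ℝ → ℝ} {h : ℝ}

lemma antitoneOn_comp_mul_left (anti : AntitoneOn f (Ici 0)) (hh : 0 ≤ h) :
    AntitoneOn (fun x ↦ f (h * x)) (Ici 0) :=
  fun _ hx _ hy hxy ↦ anti (mul_nonneg hh hx) (mul_nonneg hh hy) (mul_le_mul_of_nonneg_left hxy hh)

lemma summable_nat_comp_mul_left (anti : AntitoneOn f (Ici 0))
    (integrable : IntegrableOn f (Ioi 0)) (nonneg : ∀ t ∈ Ioi 0, 0 ≤ f t) (hh : 0 < h) :
    Summable fun m : ℕ ↦ f (h * m) :=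
  (antitoneOn_comp_mul_left anti hh.le).summable_of_integrableOn_Ioi_zero
    ((integrableOn_Ioi_comp_mul_left_iff f 0 hh).2 (by rwa [mul_zero]))
    fun t ht ↦ nonneg _ (mul_pos hh ht)

lemma mul_tsum_pnat_comp_mul_left_le_integral (anti : AntitoneOn f (Ici 0))
    (integrable : IntegrableOn f (Ioi 0)) (nonneg : ∀ t ∈ Ioi 0, 0 ≤ f t) (hh : 0 < h) :
    h * ∑' m : ℕ+, f (h * m) ≤ ∫ x in Ioi 0, f x := by
  have sum_le : ∑' m : ℕ, f (h * (m + 1 : ℕ)) ≤ ∫ x in Ioi 0, f (h * x) :=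
    (antitoneOn_comp_mul_left anti hh.le).tsum_add_one_le_integral
      ((integrableOn_Ioi_comp_mul_left_iff f 0 hh).2 (by rwa [mul_zero]))
      fun t ht ↦ nonneg _ (mul_pos hh ht)
  rwa [integral_comp_mul_left_Ioi f 0 hh, mul_zero, smul_eq_mul, le_inv_mul_iff₀ hh,
    ← tsum_pnat_eq_tsum_succ (f := fun m : ℕ ↦ f (h * m))] at sum_le

lemma abs_mul_tsum_pnat_comp_mul_left_le_integral (anti : AntitoneOn f (Ici 0))
    (integrable : IntegrableOn f (Ioi 0)) (nonneg : ∀ t ∈ Ioi 0, 0 ≤ f t) (hh : 0 < h) :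
    |h * ∑' m : ℕ+, f (h * m)| ≤ ∫ x in Ioi 0, f x := by
  rw [abs_of_nonneg (mul_nonneg hh.le (tsum_nonneg fun m ↦ nonneg _ (mem_Ioi.2 (by positivity))))]
  exact mul_tsum_pnat_comp_mul_left_le_integral anti integrable nonneg hh

lemma integral_sub_mul_le_mul_tsum_pnat_comp_mul_left (anti : AntitoneOn f (Ici 0))
    (integrable : IntegrableOn f (Ioi 0)) (nonneg : ∀ t ∈ Ioi 0, 0 ≤ f t) (hh : 0 < h) :
    (∫ x in Ioi 0, f x) - h * f 0 ≤ h * ∑' m : ℕ+, f (h * m) := by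
  have summable := summable_nat_comp_mul_left anti integrable nonneg hh
  have le_sum : ∫ x in Ioi 0, f (h * x) ≤ ∑' m : ℕ, f (h * m) :=
    (antitoneOn_comp_mul_left anti hh.le).integral_le_tsum summable
      fun t ht ↦ nonneg _ (mul_pos hh ht)
  rw [integral_comp_mul_left_Ioi f 0 hh, mul_zero, smul_eq_mul, inv_mul_le_iff₀ hh,
    ← tsum_zero_pnat_eq_tsum_nat summable, Nat.cast_zero, mul_zero, mul_add] at le_sum
  linarith

lemma tendsto_mul_tsum_pnat_comp_mul_left (anti : AntitoneOn f (Ici 0))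
    (integrable : IntegrableOn f (Ioi 0)) (nonneg : ∀ t ∈ Ioi 0, 0 ≤ f t) :
    Tendsto (fun h ↦ h * ∑' m : ℕ+, f (h * m)) (𝓝[>] 0) (𝓝 (∫ x in Ioi 0, f x)) := by
  have lower : Tendsto (fun h ↦ (∫ x in Ioi 0, f x) - h * f 0) (𝓝[>] 0)
      (𝓝 (∫ x in Ioi 0, f x)) :=
    tendsto_nhdsWithin_of_tendsto_nhds <| Continuous.tendsto' (by fun_prop) _ _ (by simp)
  refine tendsto_of_tendsto_of_tendsto_of_le_of_le' lower tendsto_const_nhds ?_ ?_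
  · filter_upwards [self_mem_nhdsWithin] with h hh using
      integral_sub_mul_le_mul_tsum_pnat_comp_mul_left anti integrable nonneg hh
  · filter_upwards [self_mem_nhdsWithin] with h hh using
      mul_tsum_pnat_comp_mul_left_le_integral anti integrable nonneg hh

end RiemannSum

lemma tsum_sum_divisors_mul {c g : ℕ → ℝ}
    (hcg : Summable fun p : ℕ+ × ℕ+ ↦ c p.1 * g (p.1 * p.2)) :
    ∑' n : ℕ+, (∑ d ∈ (n : ℕ).divisors, c d) * g n =
      ∑' d : ℕ+, c d * ∑' m : ℕ+, g (d * m) := by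
  have fiber (n : ℕ+) : (∑ d ∈ (n : ℕ).divisors, c d) * g n =
      ∑' p : (n : ℕ).divisorsAntidiagonal, c p.1.1 * g (p.1.1 * p.1.2) := by
    rw [Finset.tsum_subtype (n : ℕ).divisorsAntidiagonal fun p ↦ c p.1 * g (p.1 * p.2),
      Finset.sum_mul, ← Nat.sum_divisorsAntidiagonal fun d _ ↦ c d * g n]
    refine Finset.sum_congr rfl fun p hp ↦ ?_
    rw [(Nat.mem_divisorsAntidiagonal.1 hp).1]
  calc ∑' n : ℕ+, (∑ d ∈ (n : ℕ).divisors, c d) * g n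
      = ∑' x : Σ n : ℕ+, (n : ℕ).divisorsAntidiagonal, c x.2.1.1 * g (x.2.1.1 * x.2.1.2) := by
        rw [tsum_congr fiber]
        exact (sigmaAntidiagonalEquivProd.summable_iff.2 hcg).tsum_sigma.symm
    _ = ∑' p : ℕ+ × ℕ+, c p.1 * g (p.1 * p.2) :=
        sigmaAntidiagonalEquivProd.tsum_eq fun p : ℕ+ × ℕ+ ↦ c p.1 * g (p.1 * p.2)
    _ = ∑' d : ℕ+, c d * ∑' m : ℕ+, g (d * m) := by
        rw [hcg.tsum_prod]
        simp only [tsum_mul_left]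

section Wintner

variable {f : ℝ → ℝ} {c : ℕ → ℝ}

lemma summable_mul_comp_mul_mul (anti : AntitoneOn f (Ici 0))
    (integrable : IntegrableOn f (Ioi 0)) (nonneg : ∀ t ∈ Ioi 0, 0 ≤ f t)
    (hc : Summable fun d : ℕ+ ↦ |c d| / d) {h : ℝ} (hh : 0 < h) :
    Summable fun p : ℕ+ × ℕ+ ↦ c p.1 * f (h * (p.1 * p.2 : ℕ)) := by
  have abs_term (p : ℕ+ × ℕ+) :
      |c p.1 * f (h * (p.1 * p.2 : ℕ))| = |c p.1| * f (h * p.1 * p.2) := by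
    have : 0 ≤ f (h * p.1 * p.2) := nonneg _ (mem_Ioi.2 (by positivity))
    rw [abs_mul, Nat.cast_mul, ← mul_assoc, abs_of_nonneg this]
  refine .of_abs ?_
  simp only [abs_term]
  refine (summable_prod_of_nonneg fun p ↦ abs_term p ▸ abs_nonneg _).2 ⟨fun d ↦ ?_, ?_⟩
  · have summable : Summable fun m : ℕ ↦ f (h * d * m) :=
      summable_nat_comp_mul_left anti integrable nonneg (by positivity)
    exact (summable_pnat_iff_summable_nat.2 summable).mul_left |c d|
  · refine Summable.of_nonneg_of_le
      (fun d ↦ tsum_nonneg fun m ↦ abs_term (d, m) ▸ abs_nonneg _) (fun d ↦ ?_)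
      (hc.mul_right (h⁻¹ * ∫ x in Ioi 0, f x))
    have bound : h * d * ∑' m : ℕ+, f (h * d * m) ≤ ∫ x in Ioi 0, f x :=
      mul_tsum_pnat_comp_mul_left_le_integral anti integrable nonneg (by positivity)
    calc ∑' m : ℕ+, |c d| * f (h * d * m)
        = |c d| / d * (h⁻¹ * (h * d * ∑' m : ℕ+, f (h * d * m))) := by
          rw [tsum_mul_left]
          field_simp
      _ ≤ |c d| / d * (h⁻¹ * ∫ x in Ioi 0, f x) := by gcongr

theorem tendsto_mul_tsum_sum_divisors_mul_comp_mul_left (anti : AntitoneOn f (Ici 0))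
    (integrable : IntegrableOn f (Ioi 0)) (nonneg : ∀ t ∈ Ioi 0, 0 ≤ f t)
    (hc : Summable fun d : ℕ+ ↦ |c d| / d) :
    Tendsto (fun h ↦ h * ∑' n : ℕ+, (∑ d ∈ (n : ℕ).divisors, c d) * f (h * n)) (𝓝[>] 0)
      (𝓝 ((∑' d : ℕ+, c d / d) * ∫ x in Ioi 0, f x)) := by
  have expand {h : ℝ} (hh : 0 < h) :
      h * ∑' n : ℕ+, (∑ d ∈ (n : ℕ).divisors, c d) * f (h * n) =
        ∑' d : ℕ+, c d / d * (h * d * ∑' m : ℕ+, f (h * d * m)) := by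
    rw [tsum_sum_divisors_mul (g := fun n ↦ f (h * n))
      (summable_mul_comp_mul_mul anti integrable nonneg hc hh), ← tsum_mul_left]
    refine tsum_congr fun d ↦ ?_
    have : (d : ℝ) ≠ 0 := by positivity
    push_cast
    simp only [mul_assoc]
    field_simp
  have dominated : Tendsto (fun h ↦ ∑' d : ℕ+, c d / d * (h * d * ∑' m : ℕ+, f (h * d * m)))
      (𝓝[>] 0) (𝓝 (∑' d : ℕ+, c d / d * ∫ x in Ioi 0, f x)) := by
    refine tendsto_tsum_of_dominated_convergence (hc.mul_right (∫ x in Ioi 0, f x))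
      (fun d ↦ ?_) ?_
    · have scale : Tendsto (fun h : ℝ ↦ h * d) (𝓝[>] 0) (𝓝[>] 0) := by
        refine tendsto_nhdsWithin_iff.2 ⟨tendsto_nhdsWithin_of_tendsto_nhds <|
          Continuous.tendsto' (by fun_prop) _ _ (zero_mul _), ?_⟩
        filter_upwards [self_mem_nhdsWithin] with h (hh : 0 < h)
        exact mem_Ioi.2 (by positivity)
      exact ((tendsto_mul_tsum_pnat_comp_mul_left anti integrable nonneg).comp scale).const_mul _
    · filter_upwards [self_mem_nhdsWithin] with h (hh : 0 < h) d
      rw [Real.norm_eq_abs, abs_mul, abs_div, Nat.abs_cast]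
      gcongr
      exact abs_mul_tsum_pnat_comp_mul_left_le_integral anti integrable nonneg (by positivity)
  rw [← tsum_mul_right]
  refine dominated.congr' ?_
  filter_upwards [self_mem_nhdsWithin] with h hh using (expand hh).symm

end Wintner

lemma totient_div_eq_sum_divisors (n : ℕ) :
    (n.totient : ℝ) / n = ∑ d ∈ n.divisors, (μ d : ℝ) / d := by
  rcases n.eq_zero_or_pos with rfl | hn
  · simp
  have moebius_inversion :
      ∑ p ∈ n.divisorsAntidiagonal, (μ p.1 : ℝ) * p.2 = n.totient :=
    ArithmeticFunction.sum_eq_iff_sum_mul_moebius_eq (f := fun k ↦ (k.totient : ℝ)).1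
      (fun k _ ↦ by exact_mod_cast k.sum_totient) n hn
  rw [← moebius_inversion, Finset.sum_div, ← Nat.sum_divisorsAntidiagonal fun d _ ↦ (μ d : ℝ) / d]
  refine Finset.sum_congr rfl fun p hp ↦ ?_
  obtain ⟨hpn, -⟩ := Nat.mem_divisorsAntidiagonal.1 hp
  have : (p.2 : ℝ) ≠ 0 := by
    exact_mod_cast (Nat.pos_of_mem_divisors (Nat.snd_mem_divisors_of_mem_antidiagonal hp)).ne'
  rw [← hpn, Nat.cast_mul, mul_div_mul_right _ _ this]

lemma summable_pnat_one_div_sq : Summable fun d : ℕ+ ↦ 1 / (d : ℝ) ^ 2 :=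
  summable_pnat_iff_summable_nat.2 (Real.summable_one_div_nat_pow.2 one_lt_two)

lemma LSeries_moebius_two : LSeries (fun n ↦ (μ n : ℂ)) 2 = 6 / Real.pi ^ 2 := by
  have one_lt_re : 1 < (2 : ℂ).re := by norm_num
  have zeta_mul := ArithmeticFunction.LSeries_zeta_mul_Lseries_moebius one_lt_re
  rw [ArithmeticFunction.LSeries_zeta_eq_riemannZeta one_lt_re, riemannZeta_two] at zeta_mul
  rw [eq_div_of_mul_eq (by simp) ((mul_comm _ _).trans zeta_mul), one_div_div]

lemma tsum_pnat_moebius_div_sq : ∑' d : ℕ+, (μ d : ℝ) / d ^ 2 = 6 / Real.pi ^ 2 := by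
  apply Complex.ofReal_injective
  rw [Complex.ofReal_tsum]
  push_cast
  rw [← LSeries_moebius_two, LSeries, ← tsum_zero_pnat_eq_tsum_nat]
  · simp [LSeries.term_of_ne_zero]
  · exact ArithmeticFunction.LSeriesSummable_moebius_iff.2 (by norm_num)

lemma tendsto_mul_tsum_totient_div_mul_comp_mul_left {f : ℝ → ℝ}
    (anti : AntitoneOn f (Ici 0)) (integrable : IntegrableOn f (Ioi 0))
    (nonneg : ∀ t ∈ Ioi 0, 0 ≤ f t) :
    Tendsto (fun h ↦ h * ∑' q : ℕ+, (q : ℕ).totient / (q : ℝ) * f (h * q)) (𝓝[>] 0)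
      (𝓝 (6 / Real.pi ^ 2 * ∫ x in Ioi 0, f x)) := by
  have summable : Summable fun d : ℕ+ ↦ |(μ d : ℝ) / d| / d := by
    refine .of_nonneg_of_le (fun d ↦ by positivity) (fun d ↦ ?_) summable_pnat_one_div_sq
    rw [abs_div, Nat.abs_cast, div_div, ← sq]
    gcongr
    exact_mod_cast ArithmeticFunction.abs_moebius_le_one
  have mean := tendsto_mul_tsum_sum_divisors_mul_comp_mul_left anti integrable nonneg
    (c := fun d ↦ (μ d : ℝ) / d) summable
  simpa only [← totient_div_eq_sum_divisors, div_div, ← sq, tsum_pnat_moebius_div_sq] using mean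

lemma antitoneOn_sqrt_one_sub_sq : AntitoneOn (fun x : ℝ ↦ √(1 - x ^ 2)) (Ici 0) :=
  fun _ hx _ _ hxy ↦ Real.sqrt_le_sqrt (sub_le_sub_left (pow_le_pow_left₀ hx hxy 2) 1)

lemma support_sqrt_one_sub_sq_subset : (fun x : ℝ ↦ √(1 - x ^ 2)).support ⊆ Ioc (-1) 1 := by
  intro x hx
  obtain ⟨_, _⟩ := abs_lt.1 <| (sq_lt_one_iff_abs_lt_one x).1 <| by
    simpa using Real.sqrt_ne_zero'.1 hx
  constructor <;> linarith

lemma integrable_sqrt_one_sub_sq : Integrable fun x : ℝ ↦ √(1 - x ^ 2) := by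
  refine (integrableOn_iff_integrable_of_support_subset support_sqrt_one_sub_sq_subset).1 ?_
  exact Continuous.integrableOn_Ioc (by fun_prop)

lemma integral_Ioi_sqrt_one_sub_sq : ∫ x in Ioi (0 : ℝ), √(1 - x ^ 2) = Real.pi / 4 := by
  have even := integral_comp_abs (f := fun x ↦ √(1 - x ^ 2))
  simp only [sq_abs] at even
  rw [← setIntegral_eq_integral_of_forall_compl_eq_zero (s := Ioc (-1) 1),
    ← intervalIntegral.integral_of_le (by norm_num), integral_sqrt_one_sub_sq] at even
  · linarith
  · exact fun x hx ↦ Function.notMem_support.1 fun h ↦ hx (support_sqrt_one_sub_sq_subset h)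

lemma volume_eq_tsum_volume_Ioc_inter_preimage_sub (t : Set ℝ) :
    volume t = ∑' n : ℤ, volume (Ioc 0 1 ∩ (fun x : ℝ ↦ x - n) ⁻¹' t) := by
  let e : ℤ ≃ AddSubgroup.zmultiples (1 : ℝ) :=
    Equiv.ofInjective (fun n : ℤ ↦ n • (1 : ℝ)) (zsmul_left_strictMono one_pos).injective
  have coe_e (n : ℤ) : (e n : ℝ) = n := zsmul_one n
  have vadd_eq (n : ℤ) : e n +ᵥ t = (fun x : ℝ ↦ x - n) ⁻¹' t := by
    ext x
    rw [mem_vadd_set_iff_neg_vadd_mem, AddSubgroup.vadd_def, AddSubgroup.coe_neg, coe_e,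
      vadd_eq_add, neg_add_eq_sub, mem_preimage]
  rw [(isAddFundamentalDomain_Ioc (one_pos (α := ℝ)) 0 volume).measure_eq_tsum t, ← e.tsum_eq]
  simp only [vadd_eq, zero_add, inter_comm]

/-- The decomposition of an element of a floor ring into its fractional and integer parts, used to
sum over the translates of a periodic family. -/
def fractFloorEquiv (R : Type*) [Ring R] [LinearOrder R] [IsStrictOrderedRing R] [FloorRing R] :
    R ≃ Ico (0 : R) 1 × ℤ where
  toFun x := (⟨Int.fract x, Int.fract_nonneg x, Int.fract_lt_one x⟩, ⌊x⌋)
  invFun p := p.1 + p.2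
  left_inv := Int.fract_add_floor
  right_inv p := by
    ext
    · simpa using Int.fract_eq_self.2 p.1.2
    · simp

theorem volume_Ioc_inter_iUnion_rat {B : ℚ → Set ℝ} (measurable : ∀ c, MeasurableSet (B c))
    (disjoint : Pairwise (Function.onFun (AEDisjoint volume) B))
    (periodic : ∀ (c : ℚ) (n : ℤ), B (c + n) = (fun x : ℝ ↦ x - n) ⁻¹' B c) :
    volume (Ioc 0 1 ∩ ⋃ c, B c) = ∑' c : Ico (0 : ℚ) 1, volume (B c) := by
  calc volume (Ioc 0 1 ∩ ⋃ c, B c)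
      = ∑' c, volume (Ioc 0 1 ∩ B c) := by
        rw [inter_iUnion, measure_iUnion₀ (fun c d hcd ↦
          (disjoint hcd).mono inter_subset_right inter_subset_right) fun c ↦
            (measurableSet_Ioc.inter (measurable c)).nullMeasurableSet]
    _ = ∑' (c : Ico (0 : ℚ) 1) (n : ℤ), volume (Ioc 0 1 ∩ B (c + n)) := by
        rw [← (fractFloorEquiv ℚ).symm.tsum_eq, ENNReal.tsum_prod']
        rfl
    _ = ∑' c : Ico (0 : ℚ) 1, volume (B c) := by
        simp only [periodic, ← volume_eq_tsum_volume_Ioc_inter_preimage_sub]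

lemma den_natCast_div_of_coprime {m q : ℕ} (hq : 0 < q) (hm : q.Coprime m) :
    (m / q : ℚ).den = q :=
  Int.natCast_inj.1 <| Rat.den_div_eq_of_coprime (a := m) (b := q) (by exact_mod_cast hq) hm.symm

lemma exists_lt_coprime_eq_div {c : ℚ} (hc : c ∈ Ico 0 1) :
    ∃ m < c.den, c.den.Coprime m ∧ (m / c.den : ℚ) = c := by
  obtain ⟨m, hm⟩ := Int.eq_ofNat_of_zero_le (Rat.num_nonneg.2 hc.1)
  refine ⟨m, ?_, ?_, ?_⟩
  · exact_mod_cast hm ▸ Rat.num_lt_denom_iff.2 hc.2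
  · simpa [hm] using c.reduced.symm
  · rw [← Int.cast_natCast m]
    exact hm ▸ c.num_div_den

lemma card_rat_Ico_pnatDen_eq (q : ℕ+) :
    ENat.card ((fun c : Ico (0 : ℚ) 1 ↦ c.1.pnatDen) ⁻¹' {q}) = (q : ℕ).totient := by
  let fraction (m : {m : ℕ | m < q ∧ (q : ℕ).Coprime m}) :
      (fun c : Ico (0 : ℚ) 1 ↦ c.1.pnatDen) ⁻¹' {q} :=
    ⟨⟨m / (q : ℕ), by positivity, (div_lt_one (by positivity)).2 (Nat.cast_lt.2 m.2.1)⟩,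
      Rat.pnatDen_eq_iff_den_eq.2 (den_natCast_div_of_coprime q.pos m.2.2)⟩
  have bijective : fraction.Bijective := by
    refine ⟨fun m m' hmm' ↦ ?_, ?_⟩
    · have : (m / (q : ℕ) : ℚ) = m' / (q : ℕ) := congrArg (fun c ↦ c.1.1) hmm'
      exact Subtype.ext (Nat.cast_injective ((div_left_inj' (by positivity)).1 this))
    · rintro ⟨⟨c, hc⟩, rfl⟩
      obtain ⟨m, m_lt, coprime, hm⟩ := exists_lt_coprime_eq_div hc
      exact ⟨⟨m, m_lt, coprime⟩, Subtype.ext (Subtype.ext hm)⟩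
  have : Finite {m : ℕ | m < q ∧ (q : ℕ).Coprime m} :=
    (finite_lt_nat q).subset fun m hm ↦ hm.1
  rw [← ENat.card_congr (Equiv.ofBijective fraction bijective),
    Nat.totient_eq_card_lt_and_coprime, ENat.card_eq_coe_natCard]

lemma tsum_rat_Ico_comp_pnatDen (g : ℕ+ → ℝ≥0∞) :
    ∑' c : Ico (0 : ℚ) 1, g c.1.pnatDen = ∑' q : ℕ+, (q : ℕ).totient * g q := by
  rw [← ENNReal.tsum_fiberwise _ fun c : Ico (0 : ℚ) 1 ↦ c.1.pnatDen]
  refine tsum_congr fun q ↦ ?_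
  calc ∑' c : (fun c : Ico (0 : ℚ) 1 ↦ c.1.pnatDen) ⁻¹' {q}, g c.1.1.pnatDen
      = ∑' _ : (fun c : Ico (0 : ℚ) 1 ↦ c.1.pnatDen) ⁻¹' {q}, g q :=
        tsum_congr fun c ↦ congrArg g c.2
    _ = (q : ℕ).totient * g q := by
        rw [ENNReal.tsum_const, card_rat_Ico_pnatDen_eq]
        simp

lemma one_div_den_mul_den_le_abs_sub {c d : ℚ} (hcd : c ≠ d) :
    1 / (c.den * d.den : ℝ) ≤ |(c : ℝ) - d| := by
  have num_ne : (c - d).num ≠ 0 := Rat.num_ne_zero.2 (sub_ne_zero.2 hcd)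
  have den_le : ((c - d).den : ℝ) ≤ c.den * d.den := by
    exact_mod_cast Nat.le_of_dvd (by positivity) (Rat.sub_den_dvd c d)
  calc 1 / (c.den * d.den : ℝ) ≤ 1 / (c - d).den := by gcongr
    _ ≤ |((c - d).num : ℝ)| / (c - d).den := by
        gcongr
        exact_mod_cast Int.one_le_abs num_ne
    _ = |(c : ℝ) - d| := by
        rw [← Rat.cast_sub, Rat.cast_def (c - d), abs_div, Nat.abs_cast]

/-- The points `x` for which `(x, ε)` lies in the Ford disk tangent to the real axis at `c`. -/
def fordShadow (ε : ℝ) (c : ℚ) : Set ℝ :=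
  {x | (x - c) ^ 2 + (ε - 1 / (2 * (c.den : ℝ) ^ 2)) ^ 2 ≤ 1 / (4 * (c.den : ℝ) ^ 4)}

lemma fordSet_eq_Icc_inter_iUnion_fordShadow (ε : ℝ) :
    fordSet ε = Icc 0 1 ∩ ⋃ c, fordShadow ε c := by
  ext x
  refine and_congr_right fun _ ↦ Iff.trans ⟨?_, ?_⟩ mem_iUnion.symm
  · rintro ⟨a, q, hq, hgcd, hx⟩
    refine ⟨a / q, ?_⟩
    have hden : (((a / q : ℚ).den : ℤ) : ℝ) = q := by
      rw [Rat.den_div_eq_of_coprime (by lia) hgcd]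
    rw [Int.cast_natCast] at hden
    simpa [fordShadow, hden] using hx
  · rintro ⟨c, hx⟩
    refine ⟨c.num, c.den, by exact_mod_cast c.pos, c.reduced, ?_⟩
    simpa only [fordShadow, mem_ofPred_eq, Rat.cast_def c, Int.cast_natCast] using hx

section fordShadow

variable {ε x : ℝ} {c d : ℚ}

lemma mem_fordShadow_iff : x ∈ fordShadow ε c ↔ (x - c) ^ 2 ≤ ε / (c.den : ℝ) ^ 2 - ε ^ 2 := by
  have expand : (ε - 1 / (2 * (c.den : ℝ) ^ 2)) ^ 2 =
      ε ^ 2 - ε / (c.den : ℝ) ^ 2 + 1 / (4 * (c.den : ℝ) ^ 4) := by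
    have := c.den_ne_zero
    field_simp
    ring
  rw [fordShadow, mem_ofPred_eq, expand]
  constructor <;> intro <;> linarith

lemma measurableSet_fordShadow (ε : ℝ) (c : ℚ) : MeasurableSet (fordShadow ε c) :=
  measurableSet_le (by fun_prop) measurable_const

lemma fordShadow_add_intCast (ε : ℝ) (c : ℚ) (n : ℤ) :
    fordShadow ε (c + n) = (fun x : ℝ ↦ x - n) ⁻¹' fordShadow ε c := by
  ext x
  simp only [mem_preimage, mem_fordShadow_iff, Rat.add_intCast_den]
  push_cast
  rw [sub_sub, add_comm (n : ℝ)]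

lemma volume_fordShadow (ε : ℝ) (c : ℚ) :
    volume (fordShadow ε c) = ENNReal.ofReal (2 * √(ε / (c.den : ℝ) ^ 2 - ε ^ 2)) := by
  rcases le_or_gt 0 (ε / (c.den : ℝ) ^ 2 - ε ^ 2) with hr | hr
  · have : fordShadow ε c = Metric.closedBall (c : ℝ) √(ε / (c.den : ℝ) ^ 2 - ε ^ 2) := by
      ext x
      rw [mem_fordShadow_iff, Metric.mem_closedBall, Real.dist_eq,
        Real.le_sqrt (abs_nonneg _) hr, sq_abs]
    rw [this, Real.volume_closedBall]
  · have : fordShadow ε c = ∅ := eq_empty_of_forall_notMem fun x hx ↦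
      (hr.trans_le (sq_nonneg _)).not_ge (mem_fordShadow_iff.1 hx)
    rw [this, Real.sqrt_eq_zero_of_nonpos hr.le]
    simp

/-- For `p` the denominator of a second rational `d`, this bound and its counterpart with `c` and
`d` exchanged add up to `1 / (c.den * d.den)`, which is the least possible distance from `c` to
`d`. -/
lemma abs_sub_le_of_mem_fordShadow (hε : 0 < ε) (hx : x ∈ fordShadow ε c) {p : ℝ} (hp : 0 < p) :
    |x - c| ≤ (1 + ε * (p ^ 2 - (c.den : ℝ) ^ 2)) / (2 * c.den * p) := by
  have hq : 0 < (c.den : ℝ) := by exact_mod_cast c.pos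
  rw [mem_fordShadow_iff, ← sq_abs] at hx
  rw [le_div_iff₀ (by positivity)]
  have hx' : (c.den * |x - c|) ^ 2 ≤ ε * (1 - ε * (c.den : ℝ) ^ 2) := by
    calc _ = (c.den : ℝ) ^ 2 * |x - c| ^ 2 := by ring
      _ ≤ (c.den : ℝ) ^ 2 * (ε / (c.den : ℝ) ^ 2 - ε ^ 2) := by gcongr
      _ = _ := by field_simp
  have am_gm := two_mul_le_add_sq (c.den * |x - c|) (ε * p)
  refine le_of_mul_le_mul_left ?_ hε
  linarith

lemma aedisjoint_fordShadow (hε : 0 < ε) (hcd : c ≠ d) :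
    AEDisjoint volume (fordShadow ε c) (fordShadow ε d) := by
  let R := (1 + ε * ((d.den : ℝ) ^ 2 - (c.den : ℝ) ^ 2)) / (2 * c.den * d.den)
  have subset : fordShadow ε c ∩ fordShadow ε d ⊆ Metric.sphere (c : ℝ) R := by
    rintro x ⟨hxc, hxd⟩
    have hc : 0 < (c.den : ℝ) := by exact_mod_cast c.pos
    have hd : 0 < (d.den : ℝ) := by exact_mod_cast d.pos
    have hc' := abs_sub_le_of_mem_fordShadow hε hxc hd
    have hd' := abs_sub_le_of_mem_fordShadow hε hxd hc
    have gap := one_div_den_mul_den_le_abs_sub hcd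
    have triangle := abs_sub_le (c : ℝ) x d
    rw [abs_sub_comm (c : ℝ) x] at triangle
    have radii : (1 + ε * ((d.den : ℝ) ^ 2 - (c.den : ℝ) ^ 2)) / (2 * c.den * d.den) +
        (1 + ε * ((c.den : ℝ) ^ 2 - (d.den : ℝ) ^ 2)) / (2 * d.den * c.den) =
          1 / (c.den * d.den) := by
      field_simp
      ring
    exact le_antisymm (show |x - c| ≤ R from hc') (show R ≤ |x - c| by linarith)
  exact measure_mono_null subset (Measure.addHaar_sphere volume _ _)

end fordShadow

theorem volume_fordSet_eq_tsum {ε : ℝ} (hε : 0 < ε) :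
    volume (fordSet ε) =
      ∑' q : ℕ+, (q : ℕ).totient * ENNReal.ofReal (2 * √(ε / (q : ℝ) ^ 2 - ε ^ 2)) := by
  calc volume (fordSet ε) = volume (Ioc 0 1 ∩ ⋃ c, fordShadow ε c) := by
        rw [fordSet_eq_Icc_inter_iUnion_fordShadow]
        exact measure_congr (Ioc_ae_eq_Icc.symm.inter .rfl)
    _ = ∑' c : Ico (0 : ℚ) 1, volume (fordShadow ε c) :=
        volume_Ioc_inter_iUnion_rat (measurableSet_fordShadow ε)
          (fun _ _ ↦ aedisjoint_fordShadow hε) (fordShadow_add_intCast ε)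
    _ = _ := by
        simp only [volume_fordShadow]
        exact tsum_rat_Ico_comp_pnatDen
          fun q ↦ ENNReal.ofReal (2 * √(ε / (q : ℝ) ^ 2 - ε ^ 2))

lemma toReal_volume_fordSet_sq {h : ℝ} (hh : 0 < h) :
    (volume (fordSet (h ^ 2))).toReal =
      2 * (h * ∑' q : ℕ+, (q : ℕ).totient / (q : ℝ) * √(1 - (h * q) ^ 2)) := by
  rw [volume_fordSet_eq_tsum (by positivity), ENNReal.tsum_toReal_eq fun q ↦
    ENNReal.mul_ne_top (ENNReal.natCast_ne_top _) ENNReal.ofReal_ne_top,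
    ← mul_assoc, ← tsum_mul_left]
  refine tsum_congr fun q ↦ ?_
  have chord : √(h ^ 2 / (q : ℝ) ^ 2 - (h ^ 2) ^ 2) = h / q * √(1 - (h * q) ^ 2) := by
    rw [← Real.sqrt_sq (show 0 ≤ h / q by positivity), ← Real.sqrt_mul (sq_nonneg _)]
    congr 1
    field_simp
  rw [ENNReal.toReal_mul, ENNReal.toReal_natCast, ENNReal.toReal_ofReal (by positivity), chord]
  ring

theorem fordSet_volume_tendsto :
    Filter.Tendsto (fun ε : ℝ => (volume (fordSet ε)).toReal)
      (nhdsWithin 0 (Set.Ioi 0)) (nhds (3 / Real.pi)) := by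
  have mean : Tendsto
      (fun h ↦ 2 * (h * ∑' q : ℕ+, (q : ℕ).totient / (q : ℝ) * √(1 - (h * q) ^ 2))) (𝓝[>] 0)
      (𝓝 (2 * (6 / Real.pi ^ 2 * (Real.pi / 4)))) :=
    integral_Ioi_sqrt_one_sub_sq ▸ (tendsto_mul_tsum_totient_div_mul_comp_mul_left
      antitoneOn_sqrt_one_sub_sq integrable_sqrt_one_sub_sq.integrableOn
      fun _ _ ↦ Real.sqrt_nonneg _).const_mul 2
  have sqrt_tendsto : Tendsto Real.sqrt (𝓝[>] 0) (𝓝[>] 0) := by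
    refine tendsto_nhdsWithin_iff.2 ⟨tendsto_nhdsWithin_of_tendsto_nhds <|
      Real.continuous_sqrt.tendsto' _ _ Real.sqrt_zero, ?_⟩
    filter_upwards [self_mem_nhdsWithin] with ε hε using Real.sqrt_pos.2 hε
  have limit_eq : 2 * (6 / Real.pi ^ 2 * (Real.pi / 4)) = 3 / Real.pi := by
    field_simp
    norm_num
  rw [← limit_eq]
  refine (mean.comp sqrt_tendsto).congr' ?_
  filter_upwards [self_mem_nhdsWithin] with ε (hε : 0 < ε)
  simp only [Function.comp_apply, ← toReal_volume_fordSet_sq (Real.sqrt_pos.2 hε),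
    Real.sq_sqrt hε.le]
end

section
/- For every 0 < ε ≤ 1/2, the Lebesgue measure of the set R_ε = {x ∈ [0,1] : there exist integers a and q ≥ 1 with gcd(a,q) = 1 such that (x − a/q)² + (ε − 1/(2q²))² ≤ 1/(4q⁴)} equals 2√ε · Σ_{q ≥ 1, q² ≤ 1/ε} φ(q)·√(1/q² − ε), where φ is Euler's totient function. -/
open MeasureTheory

/-!
The Ford circles are invariant under `x ↦ x + 1`, so we may work on the circle `ℝ / ℤ`, where the
reduced fractions with denominator `q` become the `φ(q)` points of order `q`. At height `ε` the Ford
disk over such a point cuts out a ball of radius `√ε √(1/q² - ε)`. Distinct points of orders `q` and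
`s` are at distance at least `1/(qs)`, and the sum of the two radii is at most `1/(qs)`, so the
balls overlap in a null set and their measures add up.
-/

open Metric Set

section AddCircle

variable {T : ℝ} {D : Set ℕ} {r : ℕ → ℝ}

/-- The union of the closed balls of radius `r q` around the points of additive order `q` of the
circle `ℝ / Tℤ`, where `q` ranges over `D`. Points of infinite order have `addOrderOf = 0`, so they
are left out exactly when `0 ∉ D`. -/
def addOrderBalls (T : ℝ) (D : Set ℕ) (r : ℕ → ℝ) : Set (AddCircle T) :=
  ⋃ u ∈ {u : AddCircle T | addOrderOf u ∈ D}, closedBall u (r (addOrderOf u))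

theorem mem_addOrderBalls {v : AddCircle T} :
    v ∈ addOrderBalls T D r ↔
      ∃ u : AddCircle T, addOrderOf u ∈ D ∧ v ∈ closedBall u (r (addOrderOf u)) := by
  simp only [addOrderBalls, mem_iUnion, mem_ofPred_eq, exists_prop]

theorem coe_mem_closedBall_coe_iff {x y δ : ℝ} :
    (x : AddCircle T) ∈ closedBall (y : AddCircle T) δ ↔ ∃ z : ℤ, |x - (y + z * T)| ≤ δ := by
  rw [← mem_preimage, AddCircle.coe_real_preimage_closedBall_eq_iUnion]
  simp only [mem_iUnion, mem_closedBall, Real.dist_eq, zsmul_eq_mul]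

theorem countable_setOf_addOrderOf_mem (hD : ∀ q ∈ D, 0 < q) :
    {u : AddCircle T | addOrderOf u ∈ D}.Countable := by
  have hfib : {u : AddCircle T | addOrderOf u ∈ D} =
      ⋃ q ∈ D, {u : AddCircle T | addOrderOf u = q} := by
    ext u
    simp
  rw [hfib]
  refine D.to_countable.biUnion fun q hq => ?_
  exact (AddCircle.finite_setOfPred_addOrderOf_eq T (hD q hq)).countable

variable [hT : Fact (0 < T)]

theorem div_addOrderOf_mul_addOrderOf_le_dist {u v : AddCircle T} (hu : IsOfFinAddOrder u)
    (hv : IsOfFinAddOrder v) (huv : u ≠ v) : T / (addOrderOf u * addOrderOf v) ≤ dist u v := by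
  have hpos : 0 < addOrderOf u * addOrderOf v := Nat.mul_pos hu.addOrderOf_pos hv.addOrderOf_pos
  have hkill : (addOrderOf u * addOrderOf v) • (u - v) = 0 := by
    rw [smul_sub, mul_nsmul, addOrderOf_nsmul_eq_zero, smul_zero, mul_nsmul',
      addOrderOf_nsmul_eq_zero, smul_zero, sub_zero]
  have hle : addOrderOf (u - v) ≤ addOrderOf u * addOrderOf v :=
    addOrderOf_le_of_nsmul_eq_zero hpos hkill
  have hfin : IsOfFinAddOrder (u - v) := isOfFinAddOrder_iff_nsmul_eq_zero.2 ⟨_, hpos, hkill⟩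
  rw [div_le_iff₀' (by exact_mod_cast hpos), dist_eq_norm]
  calc
    T ≤ addOrderOf (u - v) * ‖u - v‖ := by
      rw [← nsmul_eq_mul]
      exact AddCircle.le_add_order_smul_norm_of_isOfFinAddOrder hfin (sub_ne_zero.2 huv)
    _ ≤ addOrderOf u * addOrderOf v * ‖u - v‖ := by
      gcongr
      exact_mod_cast hle

theorem aedisjoint_closedBall_of_add_le_dist {u v : AddCircle T} {r s : ℝ}
    (h : r + s ≤ dist u v) : AEDisjoint volume (closedBall u r) (closedBall v s) :=
  (ball_disjoint_ball h).aedisjoint.congr AddCircle.closedBall_ae_eq_ball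
    AddCircle.closedBall_ae_eq_ball

theorem tsum_addOrderOf_fiber_const {q : ℕ} (hq : 0 < q) (c : ENNReal) :
    ∑' _ : {u : AddCircle T // addOrderOf u = q}, c = q.totient * c := by
  have : Finite {u : AddCircle T // addOrderOf u = q} :=
    AddCircle.finite_setOfPred_addOrderOf_eq T hq
  rw [ENNReal.tsum_const, ENat.card_eq_coe_natCard, AddCircle.card_addOrderOf_eq_totient,
    ENat.toENNReal_coe]

theorem tsum_comp_addOrderOf (hD : ∀ q ∈ D, 0 < q) (g : ℕ → ENNReal) :
    ∑' u : {u : AddCircle T | addOrderOf u ∈ D}, g (addOrderOf (u : AddCircle T)) =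
      ∑' q, D.indicator (fun q => q.totient * g q) q := by
  have hcomp : {u : AddCircle T | addOrderOf u ∈ D}.indicator (fun u => g (addOrderOf u)) =
      fun u => D.indicator g (addOrderOf u) := rfl
  rw [tsum_subtype _ (fun u : AddCircle T => g (addOrderOf u)), hcomp,
    ← ENNReal.tsum_fiberwise _ (addOrderOf : AddCircle T → ℕ)]
  refine tsum_congr fun q => ?_
  have hfib : ∀ u : (addOrderOf : AddCircle T → ℕ) ⁻¹' {q},
      D.indicator g (addOrderOf (u : AddCircle T)) = D.indicator g q :=
    fun u => congrArg _ u.2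
  rw [tsum_congr hfib]
  by_cases hq : q ∈ D
  · rw [indicator_of_mem hq, indicator_of_mem hq]
    exact tsum_addOrderOf_fiber_const (hD q hq) _
  · simp [hq]

theorem nullMeasurableSet_addOrderBalls (hD : ∀ q ∈ D, 0 < q) (r : ℕ → ℝ) :
    NullMeasurableSet (addOrderBalls T D r) :=
  .biUnion (countable_setOf_addOrderOf_mem hD) fun _ _ => measurableSet_closedBall.nullMeasurableSet

theorem volume_addOrderBalls (hD : ∀ q ∈ D, 0 < q)
    (hr : ∀ q ∈ D, ∀ s ∈ D, r q + r s ≤ T / (q * s)) :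
    volume (addOrderBalls T D r) =
      ∑' q, D.indicator (fun q => q.totient * ENNReal.ofReal (2 * r q)) q := by
  have hfin : ∀ u : AddCircle T, addOrderOf u ∈ D → IsOfFinAddOrder u := fun u hu =>
    addOrderOf_pos_iff.1 (hD _ hu)
  have hball : ∀ u : {u : AddCircle T | addOrderOf u ∈ D},
      volume (closedBall (u : AddCircle T) (r (addOrderOf (u : AddCircle T)))) =
        ENNReal.ofReal (2 * r (addOrderOf (u : AddCircle T))) := by
    rintro ⟨u, hu⟩
    have hord : (1 : ℝ) ≤ addOrderOf u := by exact_mod_cast (hfin u hu).addOrderOf_pos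
    have hle : T / (addOrderOf u * addOrderOf u) ≤ T :=
      div_le_self hT.out.le (one_le_mul_of_one_le_of_one_le hord hord)
    rw [AddCircle.volume_closedBall, min_eq_right]
    linarith [hr _ hu _ hu]
  rw [addOrderBalls, measure_biUnion₀ (countable_setOf_addOrderOf_mem hD), tsum_congr hball,
    tsum_comp_addOrderOf hD fun q => ENNReal.ofReal (2 * r q)]
  · intro u hu v hv huv
    exact aedisjoint_closedBall_of_add_le_dist <| (hr _ hu _ hv).trans <|
      div_addOrderOf_mul_addOrderOf_le_dist (hfin u hu) (hfin v hv) huv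
  · exact fun _ _ => measurableSet_closedBall.nullMeasurableSet

theorem coe_mem_addOrderBalls_iff (hD : ∀ q ∈ D, 0 < q) {x : ℝ} :
    (x : AddCircle T) ∈ addOrderBalls T D r ↔
      ∃ q ∈ D, ∃ a : ℤ, Int.gcd a q = 1 ∧ |x - a / q * T| ≤ r q := by
  rw [mem_addOrderBalls]
  constructor
  · rintro ⟨u, hu, hxu⟩
    generalize hord : addOrderOf u = q at hu hxu
    have hq : (q : ℝ) ≠ 0 := by exact_mod_cast (hD q hu).ne'
    obtain ⟨m, -, hcop, rfl⟩ := (AddCircle.addOrderOf_eq_pos_iff (hD q hu)).1 hord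
    obtain ⟨z, hz⟩ := coe_mem_closedBall_coe_iff.1 hxu
    refine ⟨q, hu, m + z * q, ?_, ?_⟩
    · rwa [Int.gcd_add_mul_right_left, Int.gcd_natCast_natCast]
    · convert hz using 3
      push_cast
      field_simp
  · rintro ⟨q, hq, a, hcop, hx⟩
    have hord : addOrderOf ((a / q * T : ℝ) : AddCircle T) = q :=
      AddCircle.addOrderOf_div_of_gcd_eq_one' (hD q hq) hcop
    refine ⟨_, hord.symm ▸ hq, ?_⟩
    rw [hord, coe_mem_closedBall_coe_iff]
    exact ⟨0, by simpa using hx⟩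

theorem volume_Icc_inter_preimage_coe (t : ℝ) {s : Set (AddCircle T)} (hs : NullMeasurableSet s) :
    volume (Icc t (t + T) ∩ (↑) ⁻¹' s) = volume s := by
  have hmp := AddCircle.measurePreserving_mk T t
  rw [← hmp.measure_preimage hs,
    Measure.restrict_apply₀ (hs.preimage hmp.quasiMeasurePreserving), inter_comm]
  exact measure_congr (.inter .rfl Ioc_ae_eq_Icc.symm)

end AddCircle

/-- The denominators of the Ford disks that meet the horizontal line at height `ε > 0`. -/
def fordDenominators (ε : ℝ) : Set ℕ :=
  {q | 1 ≤ q ∧ (q : ℝ) ^ 2 ≤ 1 / ε}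

/-- Half the length of the chord that a Ford disk of denominator `q` cuts out of the horizontal line
at height `ε`; it is `0` when the line misses the disk. -/
noncomputable def fordHalfChord (ε : ℝ) (q : ℕ) : ℝ :=
  √ε * √(1 / (q : ℝ) ^ 2 - ε)

theorem pos_of_mem_fordDenominators {ε : ℝ} : ∀ q ∈ fordDenominators ε, 0 < q :=
  fun _ hq => hq.1

theorem fordHalfChord_nonneg (ε : ℝ) (q : ℕ) : 0 ≤ fordHalfChord ε q := by
  unfold fordHalfChord
  positivity

theorem sqrt_mul_sqrt_sub_add_le_mul {ε x y : ℝ} (hε : 0 ≤ ε) (hx : 0 ≤ x) (hy : 0 ≤ y)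
    (hεx : ε ≤ x ^ 2) (hεy : ε ≤ y ^ 2) : √ε * √(x ^ 2 - ε) + √ε * √(y ^ 2 - ε) ≤ x * y := by
  set e := √ε
  set f := √(x ^ 2 - ε)
  set g := √(y ^ 2 - ε)
  have he : e ^ 2 = ε := Real.sq_sqrt hε
  have hx' : x ^ 2 = e ^ 2 + f ^ 2 := by rw [he, Real.sq_sqrt (sub_nonneg.2 hεx)]; ring
  have hy' : y ^ 2 = g ^ 2 + e ^ 2 := by rw [he, Real.sq_sqrt (sub_nonneg.2 hεy)]; ring
  refine le_of_sq_le_sq ?_ (mul_nonneg hx hy)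
  calc
    (e * f + e * g) ^ 2 ≤ (e * f + e * g) ^ 2 + (e ^ 2 - f * g) ^ 2 :=
      le_add_of_nonneg_right (sq_nonneg _)
    _ = (x * y) ^ 2 := by rw [mul_pow, hx', hy']; ring

section Chord

variable {ε : ℝ}

theorem mem_fordDenominators_iff (hε : 0 < ε) {q : ℕ} (hq : 1 ≤ q) :
    q ∈ fordDenominators ε ↔ ε ≤ 1 / (q : ℝ) ^ 2 := by
  rw [fordDenominators, mem_ofPred_eq, and_iff_right hq, le_one_div (by positivity) hε]

theorem sq_add_sq_le_iff_abs_le_fordHalfChord (hε : 0 < ε) {q : ℕ} (hq : 1 ≤ q) {d : ℝ} :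
    d ^ 2 + (ε - 1 / (2 * (q : ℝ) ^ 2)) ^ 2 ≤ 1 / (4 * (q : ℝ) ^ 4) ↔
      q ∈ fordDenominators ε ∧ |d| ≤ fordHalfChord ε q := by
  have hq' : (q : ℝ) ≠ 0 := by positivity
  have hexpand : (ε - 1 / (2 * (q : ℝ) ^ 2)) ^ 2 =
      1 / (4 * (q : ℝ) ^ 4) - ε * (1 / (q : ℝ) ^ 2 - ε) := by
    field_simp
    ring
  have hsq : d ^ 2 + (ε - 1 / (2 * (q : ℝ) ^ 2)) ^ 2 ≤ 1 / (4 * (q : ℝ) ^ 4) ↔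
      d ^ 2 ≤ ε * (1 / (q : ℝ) ^ 2 - ε) := by
    rw [hexpand]
    constructor <;> intro h <;> linarith
  rw [hsq, mem_fordDenominators_iff hε hq, fordHalfChord, ← Real.sqrt_mul hε.le]
  constructor
  · intro h
    exact ⟨sub_nonneg.1 (nonneg_of_mul_nonneg_right ((sq_nonneg d).trans h) hε),
      Real.abs_le_sqrt h⟩
  · rintro ⟨hle, h⟩
    rwa [Real.le_sqrt (abs_nonneg d) (mul_nonneg hε.le (sub_nonneg.2 hle)), sq_abs] at h

theorem fordHalfChord_add_le (hε : 0 < ε) {q s : ℕ} (hq : q ∈ fordDenominators ε)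
    (hs : s ∈ fordDenominators ε) :
    fordHalfChord ε q + fordHalfChord ε s ≤ 1 / (q * s) := by
  have hεq := (mem_fordDenominators_iff hε hq.1).1 hq
  have hεs := (mem_fordDenominators_iff hε hs.1).1 hs
  rw [← one_div_pow] at hεq hεs
  rw [fordHalfChord, fordHalfChord, ← one_div_pow, ← one_div_pow, ← one_div_mul_one_div]
  exact sqrt_mul_sqrt_sub_add_le_mul hε.le (by positivity) (by positivity) hεq hεs

theorem fordSet_eq_Icc_inter_preimage (hε : 0 < ε) :
    fordSet ε = Icc 0 1 ∩ (fun x : ℝ => (x : UnitAddCircle)) ⁻¹'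
      addOrderBalls 1 (fordDenominators ε) (fordHalfChord ε) := by
  ext x
  simp only [fordSet, mem_ofPred_eq, mem_inter_iff, mem_preimage,
    coe_mem_addOrderBalls_iff pos_of_mem_fordDenominators, mul_one]
  refine and_congr_right fun _ => ⟨?_, ?_⟩
  · rintro ⟨a, q, hq, hcop, hx⟩
    lift q to ℕ using by lia
    obtain ⟨hqD, hx⟩ := (sq_add_sq_le_iff_abs_le_fordHalfChord hε (by exact_mod_cast hq)).1 hx
    exact ⟨q, hqD, a, hcop, hx⟩
  · rintro ⟨q, hq, a, hcop, hx⟩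
    exact ⟨a, q, by exact_mod_cast hq.1, hcop,
      (sq_add_sq_le_iff_abs_le_fordHalfChord hε hq.1).2 ⟨hq, hx⟩⟩

theorem volume_fordSet (hε : 0 < ε) :
    volume (fordSet ε) = ∑' q, (fordDenominators ε).indicator
      (fun q => q.totient * ENNReal.ofReal (2 * fordHalfChord ε q)) q := by
  rw [fordSet_eq_Icc_inter_preimage hε, ← volume_addOrderBalls (T := 1)
    pos_of_mem_fordDenominators fun q hq s hs => fordHalfChord_add_le hε hq hs]
  simpa only [zero_add] using volume_Icc_inter_preimage_coe (T := 1) 0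
    (nullMeasurableSet_addOrderBalls pos_of_mem_fordDenominators _)

end Chord

theorem fordSet_volume_eq_general {ε : ℝ} (hε : 0 < ε) :
    (volume (fordSet ε)).toReal =
      2 * √ε * ∑' q : ℕ, if 1 ≤ q ∧ (q : ℝ) ^ 2 ≤ 1 / ε then
        (q.totient : ℝ) * √(1 / (q : ℝ) ^ 2 - ε) else 0 := by
  rw [volume_fordSet hε, ENNReal.tsum_toReal_eq, ← tsum_mul_left]
  · refine tsum_congr fun q => ?_
    simp only [indicator_apply, fordDenominators, mem_ofPred_eq]
    split_ifs
    · rw [ENNReal.toReal_mul, ENNReal.toReal_natCast,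
        ENNReal.toReal_ofReal (by linarith [fordHalfChord_nonneg ε q]), fordHalfChord]
      ring
    · simp
  · intro q
    by_cases hq : q ∈ fordDenominators ε <;> simp [hq, ENNReal.mul_eq_top]

theorem fordSet_volume_eq :
    ∀ ε : ℝ, 0 < ε → ε ≤ 1 / 2 →
      (volume (fordSet ε)).toReal =
        2 * Real.sqrt ε *
          ∑' q : ℕ, if 1 ≤ q ∧ (q : ℝ) ^ 2 ≤ 1 / ε then
            (Nat.totient q : ℝ) * Real.sqrt (1 / (q : ℝ) ^ 2 - ε) else 0 :=
  fun _ hε _ => fordSet_volume_eq_general hε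
end

section
/- Let I ⊆ [0,1] be an interval of positive length |I| and let δ > 0. Define S_I(ε) = 2√ε · Σ_{q ≥ 1, q² ≤ 1/ε} Σ_{a : a/q ∈ I, gcd(a,q)=1} √(1/q² − ε). Then there is a constant C(δ) depending only on δ such that for all 0 < ε ≤ 1/2 one has |S_I(ε) − |I|·L(ε)| ≤ C(δ)·ε^{1/2−δ}. -/
open MeasureTheory

/-- `L ε = 2√ε · Σ_{q ≥ 1, q² ≤ 1/ε} φ(q)·√(1/q² − ε)`. -/
noncomputable def L (ε : ℝ) : ℝ :=
  2 * Real.sqrt ε *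
    ∑' q : ℕ, if 1 ≤ q ∧ (q : ℝ) ^ 2 ≤ 1 / ε then
      (Nat.totient q : ℝ) * Real.sqrt (1 / (q : ℝ) ^ 2 - ε) else 0

/-- `S_I ε = 2√ε · Σ_{q ≥ 1, q² ≤ 1/ε} Σ_{a : a/q ∈ I, gcd(a,q)=1} √(1/q² − ε)`. -/
noncomputable def SI (I : Set ℝ) (ε : ℝ) : ℝ :=
  2 * Real.sqrt ε *
    ∑' q : ℕ, if 1 ≤ q ∧ (q : ℝ) ^ 2 ≤ 1 / ε then
      ({a : ℤ | (a : ℝ) / q ∈ I ∧ Int.gcd a q = 1}.ncard : ℝ) *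
        Real.sqrt (1 / (q : ℝ) ^ 2 - ε) else 0

/-!
For an interval `I` with endpoints `a ≤ b`, the number of integers `x` with `x / n ∈ I` is
`(b - a) n + O(1)`. Sorting these fractions by their reduced denominator writes this number as
`∑_{d ∣ n} r(d)`, where `r(d)` counts the reduced fractions of denominator `d` in `I`. As
`∑_{d ∣ n} φ(d) = n`, Möbius inversion gives `|r(n) - (b - a) φ(n)| ≤ d(n)`, with `d(n)` the number
of divisors of `n`. The weights satisfy `√(1/q² - ε) ≤ 1/q`, so the total error is at most
`2√ε ∑_{q ≤ 1/√ε} d(q)/q ≤ 2√ε H²`, where `H = O_δ(ε^(-δ/2))` is the harmonic sum up to `1/√ε`.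
-/

section DivisorSums

variable {R : Type*} [Ring R] [LinearOrder R] [IsStrictOrderedRing R]

lemma abs_moebius_cast_le_one (n : ℕ) : |((ArithmeticFunction.moebius n : ℤ) : R)| ≤ 1 := by
  exact_mod_cast ArithmeticFunction.abs_moebius_le_one

lemma abs_le_card_divisors_mul_of_abs_sum_divisors_le {f : ℕ → R} {M : R}
    (hf : ∀ n > 0, |∑ d ∈ n.divisors, f d| ≤ M) {n : ℕ} (hn : 0 < n) :
    |f n| ≤ n.divisors.card * M := by
  have inversion := ArithmeticFunction.sum_eq_iff_sum_mul_moebius_eq.1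
    (fun m (_ : 0 < m) ↦ (rfl : ∑ d ∈ m.divisors, f d = ∑ d ∈ m.divisors, f d)) n hn
  rw [← inversion, Nat.sum_divisorsAntidiagonal
    fun d m : ℕ ↦ ((ArithmeticFunction.moebius d : ℤ) : R) * ∑ e ∈ m.divisors, f e, ← nsmul_eq_mul]
  refine (Finset.abs_sum_le_sum_abs _ _).trans (Finset.sum_le_card_nsmul _ _ _ fun d hd ↦ ?_)
  have hnd : 0 < n / d := Nat.div_pos (Nat.divisor_le hd) (Nat.pos_of_mem_divisors hd)
  calc |((ArithmeticFunction.moebius d : ℤ) : R) * ∑ e ∈ (n / d).divisors, f e|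
      = |((ArithmeticFunction.moebius d : ℤ) : R)| * |∑ e ∈ (n / d).divisors, f e| := abs_mul _ _
    _ ≤ 1 * |∑ e ∈ (n / d).divisors, f e| := by gcongr; exact abs_moebius_cast_le_one d
    _ ≤ M := (one_mul _).trans_le (hf _ hnd)

end DivisorSums

lemma sum_sum_divisorsAntidiagonal_le_sum_mul_sum {R : Type*} [Semiring R] [PartialOrder R]
    [IsOrderedRing R] {f g : ℕ → R} (hf : ∀ n, 0 ≤ f n) (hg : ∀ n, 0 ≤ g n) (N : ℕ) :
    ∑ n ∈ Finset.Icc 1 N, ∑ p ∈ n.divisorsAntidiagonal, f p.1 * g p.2 ≤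
      (∑ n ∈ Finset.Icc 1 N, f n) * ∑ n ∈ Finset.Icc 1 N, g n := by
  have divisorsAntidiagonal_eq : ∀ n ∈ Finset.Icc 1 N, n.divisorsAntidiagonal =
      {p ∈ Finset.Icc 1 N ×ˢ Finset.Icc 1 N | p.1 * p.2 = n} := fun n hn ↦ by
    rw [Finset.mem_Icc] at hn
    exact Nat.divisorsAntidiagonal_eq_prod_filter_of_le (by lia) hn.2
  rw [Finset.sum_mul_sum, ← Finset.sum_product',
    Finset.sum_congr rfl fun n hn ↦ by rw [divisorsAntidiagonal_eq n hn]]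
  exact Finset.sum_fiberwise_le_sum_of_sum_fiber_nonneg fun _ _ ↦
    Finset.sum_nonneg fun p _ ↦ mul_nonneg (hf p.1) (hg p.2)

lemma sum_card_divisors_div_le_harmonic_sq (N : ℕ) :
    ∑ n ∈ Finset.Icc 1 N, (n.divisors.card : ℝ) / n ≤ (harmonic N : ℝ) ^ 2 := by
  have card_div_eq (n : ℕ) : (n.divisors.card : ℝ) / n =
      ∑ p ∈ n.divisorsAntidiagonal, (p.1 : ℝ)⁻¹ * (p.2 : ℝ)⁻¹ := by
    rw [Nat.sum_divisorsAntidiagonal fun d e : ℕ ↦ (d : ℝ)⁻¹ * (e : ℝ)⁻¹, div_eq_mul_inv,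
      ← nsmul_eq_mul, ← Finset.sum_const]
    refine Finset.sum_congr rfl fun d hd ↦ ?_
    rw [← mul_inv, ← Nat.cast_mul, Nat.mul_div_cancel' (Nat.dvd_of_mem_divisors hd)]
  rw [Finset.sum_congr rfl fun n _ ↦ card_div_eq n, harmonic_eq_sum_Icc, Rat.cast_sum, sq]
  simp only [Rat.cast_inv, Rat.cast_natCast]
  exact sum_sum_divisorsAntidiagonal_le_sum_mul_sum (f := fun n ↦ (n : ℝ)⁻¹)
    (g := fun n ↦ (n : ℝ)⁻¹) (fun _ ↦ by positivity) (fun _ ↦ by positivity) N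

lemma harmonic_floor_le_rpow {δ : ℝ} (hδ : 0 < δ) {x : ℝ} (hx : 0 ≤ x) :
    (harmonic ⌊x⌋₊ : ℝ) ≤ (1 + 1 / δ) * x ^ δ := by
  rcases lt_or_ge x 1 with hx1 | hx1
  · rw [Nat.floor_eq_zero.2 hx1, harmonic_zero, Rat.cast_zero]
    positivity
  · calc (harmonic ⌊x⌋₊ : ℝ) ≤ 1 + Real.log x := harmonic_floor_le_one_add_log x hx1
      _ ≤ x ^ δ + x ^ δ / δ :=
        add_le_add (Real.one_le_rpow hx1 hδ.le) (Real.log_le_rpow_div hx hδ)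
      _ = (1 + 1 / δ) * x ^ δ := by ring

lemma finite_intCast_preimage_of_subset_Icc {R : Type*} [Ring R] [LinearOrder R]
    [FloorRing R] {J : Set R} {a b : R} (hJ : J ⊆ Set.Icc a b) :
    (((↑) : ℤ → R) ⁻¹' J).Finite := by
  refine Set.Finite.subset ?_ (Set.preimage_mono hJ)
  rw [Int.preimage_Icc]
  exact Set.finite_Icc _ _

lemma abs_ncard_intCast_preimage_sub_le_one {R : Type*} [CommRing R] [LinearOrder R]
    [IsStrictOrderedRing R] [FloorRing R] {J : Set R} {a b : R} (hab : a ≤ b)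
    (hsub : Set.Ioo a b ⊆ J) (hsup : J ⊆ Set.Icc a b) :
    |((((↑) : ℤ → R) ⁻¹' J).ncard : R) - (b - a)| ≤ 1 := by
  set N := (((↑) : ℤ → R) ⁻¹' J).ncard
  have upper : (N : ℤ) ≤ ⌊b⌋ + 1 - ⌈a⌉ := by
    have ncard_le := Set.ncard_le_ncard (Set.preimage_mono hsup)
      (finite_intCast_preimage_of_subset_Icc subset_rfl)
    rw [Int.preimage_Icc, ← Finset.coe_Icc, Set.ncard_coe_finset, Int.card_Icc] at ncard_le
    have := (Int.ceil_mono hab).trans (Int.ceil_le_floor_add_one b)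
    lia
  have lower : ⌈b⌉ - ⌊a⌋ - 1 ≤ (N : ℤ) := by
    have le_ncard := Set.ncard_le_ncard (Set.preimage_mono hsub)
      (finite_intCast_preimage_of_subset_Icc hsup)
    rw [Int.preimage_Ioo, ← Finset.coe_Ioo, Set.ncard_coe_finset, Int.card_Ioo] at le_ncard
    lia
  have upper' : (N : R) ≤ ⌊b⌋ + 1 - ⌈a⌉ := by exact_mod_cast upper
  have lower' : (⌈b⌉ : R) - ⌊a⌋ - 1 ≤ N := by exact_mod_cast lower
  rw [abs_le]
  constructor <;>
    linarith [Int.floor_le a, Int.le_ceil a, Int.floor_le b, Int.le_ceil b]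

section FractionCount

variable {K : Type*} [Field K]

/-- The number of integers `x` with `x / q ∈ I`, i.e. of fractions in `I` with the not necessarily
reduced denominator `q`. It is `0` if there are infinitely many. -/
noncomputable def fractionCount (I : Set K) (q : ℕ) : ℕ :=
  {x : ℤ | (x : K) / q ∈ I}.ncard

/-- The number of reduced fractions in `I` with denominator `q`, the coefficient of `√(1/q² - ε)` in
`SI I ε`. It is `0` if there are infinitely many. -/
noncomputable def reducedFractionCount (I : Set K) (q : ℕ) : ℕ :=
  {x : ℤ | (x : K) / q ∈ I ∧ Int.gcd x q = 1}.ncard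

lemma ncard_div_mem_and_gcd_eq [CharZero K] (I : Set K) {g : ℕ} (hg : g ≠ 0) (m : ℕ) :
    {x : ℤ | (x : K) / (g * m : ℕ) ∈ I ∧ Int.gcd x (g * m : ℕ) = g}.ncard =
      reducedFractionCount I m := by
  have gcd_scaled (y : ℤ) : Int.gcd (g * y) (g * m : ℕ) = g * Int.gcd y m := by
    rw [Nat.cast_mul, Int.gcd_mul_left, Int.natAbs_natCast]
  have div_scaled (y : ℤ) : ((g * y : ℤ) : K) / (g * m : ℕ) = y / m := by
    push_cast
    exact mul_div_mul_left _ _ (Nat.cast_ne_zero.2 hg)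
  rw [reducedFractionCount,
    ← Set.ncard_image_of_injective {x : ℤ | (x : K) / m ∈ I ∧ Int.gcd x m = 1}
      (mul_right_injective₀ (Int.natCast_ne_zero.2 hg))]
  congr 1
  ext x
  constructor
  · rintro ⟨hxI, hgcd⟩
    obtain ⟨y, rfl⟩ : (g : ℤ) ∣ x := hgcd ▸ Int.gcd_dvd_left x (g * m : ℕ)
    rw [div_scaled] at hxI
    rw [gcd_scaled] at hgcd
    exact ⟨y, ⟨hxI, (Nat.mul_eq_left hg).1 hgcd⟩, rfl⟩
  · rintro ⟨y, ⟨hyI, hgcd⟩, rfl⟩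
    exact ⟨(div_scaled y).symm ▸ hyI, (gcd_scaled y).trans (by rw [hgcd, mul_one])⟩

lemma sum_divisors_reducedFractionCount [CharZero K] {I : Set K} {n : ℕ} (hn : n ≠ 0)
    (hfin : {x : ℤ | (x : K) / n ∈ I}.Finite) :
    ∑ d ∈ n.divisors, reducedFractionCount I d = fractionCount I n := by
  classical
  have gcd_mem_divisors : Set.MapsTo (fun x : ℤ ↦ Int.gcd x n) hfin.toFinset n.divisors :=
    fun x _ ↦ Nat.mem_divisors.2 ⟨Int.natCast_dvd_natCast.1 (Int.gcd_dvd_right x n), hn⟩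
  rw [← Nat.sum_div_divisors n, fractionCount, Set.ncard_eq_toFinset_card _ hfin,
    Finset.card_eq_sum_card_fiberwise gcd_mem_divisors]
  refine Finset.sum_congr rfl fun g hg ↦ ?_
  obtain ⟨m, rfl⟩ := Nat.dvd_of_mem_divisors hg
  have hg0 : g ≠ 0 := left_ne_zero_of_mul hn
  rw [Nat.mul_div_cancel_left _ (Nat.pos_of_ne_zero hg0), ← ncard_div_mem_and_gcd_eq I hg0,
    ← Set.ncard_coe_finset]
  congr 1
  ext x
  simp

variable [LinearOrder K] [IsStrictOrderedRing K] {I : Set K} {a b : K}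

lemma setOf_div_mem_subset_Icc (hsup : I ⊆ Set.Icc a b) {t : K} (ht : 0 < t) :
    {x : K | x / t ∈ I} ⊆ Set.Icc (a * t) (b * t) := fun _ hx ↦
  ⟨(le_div_iff₀ ht).1 (hsup hx).1, (div_le_iff₀ ht).1 (hsup hx).2⟩

variable [FloorRing K]

lemma abs_fractionCount_sub_le_one (hab : a ≤ b) (hsub : Set.Ioo a b ⊆ I)
    (hsup : I ⊆ Set.Icc a b) {n : ℕ} (hn : 0 < n) :
    |(fractionCount I n : K) - (b - a) * n| ≤ 1 := by
  have hn' : (0 : K) < n := Nat.cast_pos.2 hn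
  have Ioo_subset : Set.Ioo (a * n) (b * n) ⊆ {x : K | x / n ∈ I} := fun _ hx ↦
    hsub ⟨(lt_div_iff₀ hn').2 hx.1, (div_lt_iff₀ hn').2 hx.2⟩
  have count_eq : fractionCount I n = (((↑) : ℤ → K) ⁻¹' {x : K | x / n ∈ I}).ncard := rfl
  rw [count_eq, sub_mul]
  exact abs_ncard_intCast_preimage_sub_le_one (by gcongr) Ioo_subset
    (setOf_div_mem_subset_Icc hsup hn')

lemma abs_reducedFractionCount_sub_le_card_divisors (hab : a ≤ b) (hsub : Set.Ioo a b ⊆ I)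
    (hsup : I ⊆ Set.Icc a b) {n : ℕ} (hn : 0 < n) :
    |(reducedFractionCount I n : K) - (b - a) * n.totient| ≤ n.divisors.card := by
  have abs_sum_divisors_le : ∀ m > 0,
      |∑ d ∈ m.divisors, ((reducedFractionCount I d : K) - (b - a) * d.totient)| ≤ 1 := by
    intro m hm
    have hfin : {x : ℤ | (x : K) / m ∈ I}.Finite := finite_intCast_preimage_of_subset_Icc
      (setOf_div_mem_subset_Icc hsup (Nat.cast_pos.2 hm))
    rw [Finset.sum_sub_distrib, ← Finset.mul_sum, ← Nat.cast_sum, ← Nat.cast_sum,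
      sum_divisors_reducedFractionCount hm.ne' hfin, Nat.sum_totient]
    exact abs_fractionCount_sub_le_one hab hsub hsup hm
  simpa only [mul_one] using
    abs_le_card_divisors_mul_of_abs_sum_divisors_le abs_sum_divisors_le hn

end FractionCount

lemma Ioo_sInf_sSup_subset_of_ordConnected {α : Type*} [ConditionallyCompleteLinearOrder α]
    {s : Set α} (hs : s.OrdConnected) (hne : s.Nonempty) :
    Set.Ioo (sInf s) (sSup s) ⊆ s := fun _ hx ↦
  have ⟨_, hy, hyx⟩ := exists_lt_of_csInf_lt hne hx.1
  have ⟨_, hz, hxz⟩ := exists_lt_of_lt_csSup hne hx.2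
  hs.out hy hz ⟨hyx.le, hxz.le⟩

lemma exists_Ioo_subset_subset_Icc_volume_eq {I : Set ℝ} (hI : I.OrdConnected)
    (hbdd : Bornology.IsBounded I) :
    ∃ a b : ℝ, a ≤ b ∧ Set.Ioo a b ⊆ I ∧ I ⊆ Set.Icc a b ∧ (volume I).toReal = b - a := by
  rcases I.eq_empty_or_nonempty with rfl | hne
  · exact ⟨0, 0, by simp⟩
  have hab := csInf_le_csSup hne hbdd.bddBelow hbdd.bddAbove
  have hsub := Ioo_sInf_sSup_subset_of_ordConnected hI hne
  have hsup := subset_Icc_csInf_csSup hbdd.bddBelow hbdd.bddAbove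
  refine ⟨sInf I, sSup I, hab, hsub, hsup, ?_⟩
  have volume_eq : volume I = ENNReal.ofReal (sSup I - sInf I) :=
    le_antisymm ((measure_mono hsup).trans_eq Real.volume_Icc)
      (Real.volume_Ioo.symm.trans_le (measure_mono hsub))
  rw [volume_eq, ENNReal.toReal_ofReal (sub_nonneg.2 hab)]

section TruncatedSums

variable {ε : ℝ}

lemma tsum_ite_sq_le_one_div_eq_sum_Icc {M : Type*} [AddCommMonoid M] [TopologicalSpace M]
    (hε : 0 < ε) (f : ℕ → M) :
    (∑' q : ℕ, if 1 ≤ q ∧ (q : ℝ) ^ 2 ≤ 1 / ε then f q else 0) =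
      ∑ q ∈ Finset.Icc 1 ⌊1 / √ε⌋₊, f q := by
  have mem_iff (q : ℕ) : q ∈ Finset.Icc 1 ⌊1 / √ε⌋₊ ↔ 1 ≤ q ∧ (q : ℝ) ^ 2 ≤ 1 / ε := by
    rw [Finset.mem_Icc, Nat.le_floor_iff (by positivity), one_div, one_div,
      ← Real.sqrt_inv, Real.le_sqrt (by positivity) (by positivity)]
  simp only [← mem_iff]
  rw [tsum_eq_sum fun q hq ↦ if_neg hq, Finset.sum_congr rfl fun q hq ↦ if_pos hq]

lemma sqrt_one_div_sq_sub_le (hε : 0 ≤ ε) {x : ℝ} (hx : 0 ≤ x) :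
    √(1 / x ^ 2 - ε) ≤ 1 / x := by
  calc √(1 / x ^ 2 - ε) ≤ √((1 / x) ^ 2) := by
        gcongr
        rw [one_div_pow]
        exact sub_le_self _ hε
    _ = 1 / x := Real.sqrt_sq (by positivity)

lemma SI_sub_mul_L_eq (hε : 0 < ε) (I : Set ℝ) (c : ℝ) :
    SI I ε - c * L ε = 2 * √ε * ∑ q ∈ Finset.Icc 1 ⌊1 / √ε⌋₊,
      ((reducedFractionCount I q : ℝ) - c * q.totient) * √(1 / (q : ℝ) ^ 2 - ε) := by
  rw [SI, L, tsum_ite_sq_le_one_div_eq_sum_Icc hε, tsum_ite_sq_le_one_div_eq_sum_Icc hε,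
    mul_left_comm, ← mul_sub, Finset.mul_sum, ← Finset.sum_sub_distrib]
  simp only [reducedFractionCount, sub_mul, mul_assoc]

lemma abs_SI_sub_volume_mul_L_le_harmonic_sq {I : Set ℝ} (hI : I.OrdConnected)
    (hbdd : Bornology.IsBounded I) (hε : 0 < ε) :
    |SI I ε - (volume I).toReal * L ε| ≤ 2 * √ε * (harmonic ⌊1 / √ε⌋₊ : ℝ) ^ 2 := by
  obtain ⟨a, b, hab, hsub, hsup, volume_eq⟩ := exists_Ioo_subset_subset_Icc_volume_eq hI hbdd
  rw [volume_eq, SI_sub_mul_L_eq hε, abs_mul, abs_of_nonneg (by positivity)]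
  gcongr
  refine (Finset.abs_sum_le_sum_abs _ _).trans
    (le_trans (Finset.sum_le_sum fun q hq ↦ ?_) (sum_card_divisors_div_le_harmonic_sq _))
  rw [abs_mul, abs_of_nonneg (Real.sqrt_nonneg _), div_eq_mul_one_div (q.divisors.card : ℝ)]
  exact mul_le_mul
    (abs_reducedFractionCount_sub_le_card_divisors hab hsub hsup (Finset.mem_Icc.1 hq).1)
    (sqrt_one_div_sq_sub_le hε.le q.cast_nonneg) (Real.sqrt_nonneg _) (Nat.cast_nonneg _)

lemma sqrt_mul_one_div_sqrt_rpow_sq (hε : 0 < ε) (δ : ℝ) :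
    √ε * ((1 / √ε) ^ δ) ^ 2 = ε ^ ((1 : ℝ) / 2 - δ) := by
  rw [one_div, Real.inv_rpow (Real.sqrt_nonneg ε), inv_pow, Real.rpow_pow_comm (Real.sqrt_nonneg ε),
    Real.sq_sqrt hε.le, Real.rpow_sub hε, ← Real.sqrt_eq_rpow, div_eq_mul_inv]

end TruncatedSums

theorem SI_eq_length_mul_L_add_error_general {δ : ℝ} (hδ : 0 < δ) {I : Set ℝ}
    (hI : I.OrdConnected) (hbdd : Bornology.IsBounded I) {ε : ℝ} (hε : 0 < ε) :
    |SI I ε - (volume I).toReal * L ε| ≤ 2 * (1 + 1 / δ) ^ 2 * ε ^ ((1 : ℝ) / 2 - δ) :=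
  have harmonic_nonneg : (0 : ℝ) ≤ harmonic ⌊1 / √ε⌋₊ :=
    Rat.cast_nonneg.2 (Finset.sum_nonneg fun _ _ ↦ by positivity)
  calc |SI I ε - (volume I).toReal * L ε|
      ≤ 2 * √ε * (harmonic ⌊1 / √ε⌋₊ : ℝ) ^ 2 := abs_SI_sub_volume_mul_L_le_harmonic_sq hI hbdd hε
    _ ≤ 2 * √ε * ((1 + 1 / δ) * (1 / √ε) ^ δ) ^ 2 := by
        gcongr
        exact harmonic_floor_le_rpow hδ (by positivity)
    _ = 2 * (1 + 1 / δ) ^ 2 * (√ε * ((1 / √ε) ^ δ) ^ 2) := by ring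
    _ = 2 * (1 + 1 / δ) ^ 2 * ε ^ ((1 : ℝ) / 2 - δ) := by rw [sqrt_mul_one_div_sqrt_rpow_sq hε]

theorem SI_eq_length_mul_L_add_error :
    ∀ δ : ℝ, 0 < δ → ∃ C : ℝ, 0 < C ∧
      ∀ I : Set ℝ, I.OrdConnected → I ⊆ Set.Icc (0 : ℝ) 1 → 0 < (volume I).toReal →
        ∀ ε : ℝ, 0 < ε → ε ≤ 1 / 2 →
          |SI I ε - (volume I).toReal * L ε| ≤ C * ε ^ ((1 : ℝ) / 2 - δ) := by
  exact fun δ hδ ↦ ⟨2 * (1 + 1 / δ) ^ 2, by positivity, fun _ hI hsub _ _ hε _ ↦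
    SI_eq_length_mul_L_add_error_general hδ hI ((Metric.isBounded_Icc 0 1).subset hsub) hε⟩
end
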